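/- Let $D : (0,\infty) \times \mathbb{N} \to [0,\infty)$ be non-decreasing in its first argument with $\liminf_{k \to \infty} D(N,k) < \infty$ for some $N > 0$, and let $R : (0,\infty) \times \mathbb{N} \to \mathbb{R}$ satisfy $\lim_{N_0 \to 0^+} \sup_{k \in \mathbb{N},\, 0 < N \le N_0} |R(N,k)| = 0$. Define $\Pi(N,k) := D(N,k) + R(N,k)$ and $\epsilon^\star := \inf_{N > 0} \liminf_{k \to \infty} D(N,k)$. Then there exists a sequence $N_F : \mathbb{N} \to (0,\infty)$ with $\lim_{k \to \infty} N_F(k) = 0$ such that $\liminf_{N_0 \to 0^+} \limsup_{k \to \infty} \inf_{N \in (N_F(k), N_0)} \Pi(N,k) \ge \epsilon^\star$ (infimum over an empty interval interpreted as $+\infty$, or the inequality required only along $k$ with $N_F(k) < N_0$). -/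

import Mathlib

open Filter Topology

/-!
Along any sequence `N m → 0⁺`, every column satisfies `ε⋆ ≤ liminf_k D (N m) k`. A diagonal
extraction lets `m = φ k` tend to infinity with `k`, slowly enough that `NF k = N (φ k)` still
satisfies `ε⋆ ≤ liminf_k D (NF k) k`. By monotonicity `D N k ≥ D (NF k) k` for every `N > NF k`,
while `R N k` is small uniformly in `k` once `N < N₀` is small, so the flux inherits the lower bound
on `(NF k, N₀)`.
-/

theorem exists_tendsto_atTop_eventually_diagonal {P : ℕ → ℕ → Prop}
    (hP : ∀ m, ∀ᶠ k in atTop, P m k) :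
    ∃ φ : ℕ → ℕ, Tendsto φ atTop atTop ∧ ∀ᶠ k in atTop, P (φ k) k := by
  classical
  refine ⟨fun k => Nat.findGreatest (P · k) k, tendsto_atTop.2 fun m => ?_, ?_⟩
  · filter_upwards [hP m, eventually_ge_atTop m] with k hk hmk
    exact Nat.le_findGreatest hmk hk
  · filter_upwards [hP 0] with k hk
    exact Nat.findGreatest_spec (P := (P · k)) (Nat.zero_le k) hk

theorem exists_tendsto_atTop_tendsto_diagonal {α : Type*} {l : Filter α} [l.IsCountablyGenerated]
    {f : ℕ → ℕ → α} (hf : ∀ m, Tendsto (f m) atTop l) :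
    ∃ φ : ℕ → ℕ, Tendsto φ atTop atTop ∧ Tendsto (fun k => f (φ k) k) atTop l := by
  obtain ⟨s, hs⟩ := l.exists_antitone_basis
  obtain ⟨φ, hφ, hmem⟩ :=
    exists_tendsto_atTop_eventually_diagonal fun m => (hf m).eventually (hs.mem m)
  refine ⟨φ, hφ, hs.tendsto_right_iff.2 fun m _ => ?_⟩
  filter_upwards [hmem, hφ.eventually_ge_atTop m] with k hk hmk
  exact hs.antitone hmk hk

section Liminf

variable {α : Type*} [CompleteLinearOrder α] [TopologicalSpace α] [OrderTopology α]

theorem le_liminf_iff_tendsto_min {ι : Type*} {l : Filter ι} {f : ι → α} {c : α} :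
    c ≤ liminf f l ↔ Tendsto (fun i => min c (f i)) l (𝓝 c) := by
  rw [le_liminf_iff, tendsto_order]
  constructor
  · intro h
    refine ⟨fun b hb => (h b hb).mono fun i hi => lt_min hb hi, fun b hb => ?_⟩
    exact .of_forall fun i => (min_le_left c (f i)).trans_lt hb
  · rintro ⟨h, -⟩ b hb
    exact (h b hb).mono fun i hi => hi.trans_le (min_le_right c (f i))

theorem exists_tendsto_atTop_le_liminf_diagonal [FirstCountableTopology α]
    {f : ℕ → ℕ → α} {c : α} (hf : ∀ m, c ≤ liminf (f m) atTop) :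
    ∃ φ : ℕ → ℕ, Tendsto φ atTop atTop ∧ c ≤ liminf (fun k => f (φ k) k) atTop := by
  -- Convergence to the countably generated filter `𝓝 c` survives diagonal extraction.
  simp only [le_liminf_iff_tendsto_min] at hf ⊢
  exact exists_tendsto_atTop_tendsto_diagonal hf

theorem exists_seq_tendsto_iInf_liminf_le_liminf [FirstCountableTopology α] {ι : Type*}
    {l : Filter ι} [l.IsCountablyGenerated] {p : ι → Prop} (hp : ∃ᶠ i in l, p i)
    (f : ι → ℕ → α) :
    ∃ a : ℕ → ι, (∀ k, p (a k)) ∧ Tendsto a atTop l ∧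
      ⨅ (i) (_ : p i), liminf (f i) atTop ≤ liminf (fun k => f (a k) k) atTop := by
  obtain ⟨u, hu, hpu⟩ := exists_seq_forall_of_frequently hp
  obtain ⟨φ, hφ, hle⟩ := exists_tendsto_atTop_le_liminf_diagonal fun m =>
    iInf₂_le (f := fun i (_ : p i) => liminf (f i) atTop) (u m) (hpu m)
  exact ⟨u ∘ φ, fun k => hpu (φ k), hu.comp hφ, hle⟩

end Liminf

theorem le_liminf_liminf_iInf_Ioo {ι : Type*} {l : Filter ι} {D F : ℝ → ι → ℝ} {a : ι → ℝ}
    {c : EReal} (hD : ∀ k, MonotoneOn (D · k) (Set.Ioi 0))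
    (hF : ∀ δ > (0 : ℝ), ∃ M > (0 : ℝ), ∀ k N, 0 < N → N ≤ M → D N k - δ ≤ F N k)
    (ha : ∀ k, 0 < a k) (hc : c ≤ liminf (fun k => (D (a k) k : EReal)) l) :
    c ≤ liminf (fun N₀ : ℝ => liminf (fun k => ⨅ N ∈ Set.Ioo (a k) N₀, (F N k : EReal)) l)
      (𝓝[>] 0) := by
  refine EReal.ge_of_forall_gt_iff_ge.1 fun z hz => ?_
  obtain ⟨w, hzw, hwc⟩ := EReal.lt_iff_exists_real_btwn.1 hz
  obtain ⟨M, hM, hFM⟩ := hF (w - z) (sub_pos.2 (EReal.coe_lt_coe_iff.1 hzw))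
  have hDw : ∀ᶠ k in l, (w : EReal) < D (a k) k := eventually_lt_of_lt_liminf (hwc.trans_le hc)
  refine le_liminf_of_le (h := ?_)
  filter_upwards [Ioo_mem_nhdsGT hM] with N₀ hN₀
  refine le_liminf_of_le (h := ?_)
  filter_upwards [hDw] with k hk
  refine le_iInf₂ fun N hN => EReal.coe_le_coe_iff.2 ?_
  have hN_pos : 0 < N := (ha k).trans hN.1
  calc
    z = w - (w - z) := (sub_sub_cancel w z).symm
    _ ≤ D (a k) k - (w - z) := sub_le_sub_right (EReal.coe_lt_coe_iff.1 hk).le _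
    _ ≤ D N k - (w - z) := sub_le_sub_right (hD k (ha k) hN_pos hN.1.le) _
    _ ≤ F N k := hFM k N hN_pos (hN.2.trans hN₀.2).le

theorem partial_inverse_cascade_general (D R Pflux : ℝ → ℕ → ℝ)
    (hDmono : ∀ (k : ℕ) (N N' : ℝ), 0 < N → N ≤ N' → D N k ≤ D N' k)
    (hR : ∀ δ > (0 : ℝ), ∃ M > (0 : ℝ), ∀ (k : ℕ) (N : ℝ), 0 < N → N ≤ M →
      |R N k| ≤ δ)
    (hPflux : ∀ (N : ℝ) (k : ℕ), Pflux N k = D N k + R N k) :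
    ∃ NF : ℕ → ℝ, (∀ k, 0 < NF k) ∧ Tendsto NF atTop (𝓝 0) ∧
      (⨅ (N : ℝ) (_ : 0 < N), liminf (fun k => (D N k : EReal)) atTop)
        ≤ liminf
            (fun N0 : ℝ => liminf
              (fun k => ⨅ N ∈ Set.Ioo (NF k) N0, (Pflux N k : EReal)) atTop)
            (𝓝[>] (0 : ℝ)) := by
  have hfreq : ∃ᶠ N : ℝ in 𝓝[>] 0, 0 < N :=
    (eventually_mem_nhdsWithin (a := (0 : ℝ)) (s := Set.Ioi 0)).frequently
  obtain ⟨NF, hpos, hlim, hD⟩ :=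
    exists_seq_tendsto_iInf_liminf_le_liminf hfreq fun N k => (D N k : EReal)
  refine ⟨NF, hpos, tendsto_nhds_of_tendsto_nhdsWithin hlim, ?_⟩
  refine le_liminf_liminf_iInf_Ioo (fun k N hN N' _ => hDmono k N N' hN) (fun δ hδ => ?_) hpos hD
  obtain ⟨M, hM, hRM⟩ := hR δ hδ
  refine ⟨M, hM, fun k N hN hNM => ?_⟩
  rw [hPflux, sub_eq_add_neg]
  exact add_le_add_right (neg_le_of_abs_le (hRM k N hN hNM)) _

/-- Partial inverse cascade (Theorem 4.1, real-variable content).  `D N k` is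
the wave-action dissipation below frequency `N` (non-negative, non-decreasing
in `N`, with finite liminf for some `N > 0`), `R` an error vanishing uniformly
in `k` as `N → 0⁺`, and `Pflux = D + R` the normalized wave-action flux.  With
`ε⋆ = inf_{N>0} liminf_k D(N,k)`, there exists `N_F(k) → 0` (positive) such
that `liminf_{N₀→0⁺} limsup_k inf_{N ∈ (N_F(k),N₀)} Pflux(N,k) ≥ ε⋆`.  The
liminf/limsup/inf are computed in `EReal`; the infimum over an empty interval
is `⊤ = +∞`. -/
theorem partial_inverse_cascade (D R Pflux : ℝ → ℕ → ℝ)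
    (hD0 : ∀ (N : ℝ) (k : ℕ), 0 < N → 0 ≤ D N k)
    (hDmono : ∀ (k : ℕ) (N N' : ℝ), 0 < N → N ≤ N' → D N k ≤ D N' k)
    (hfin : ∃ N : ℝ, 0 < N ∧
      Filter.liminf (fun k => (D N k : EReal)) atTop < ⊤)
    (hR : ∀ δ > (0:ℝ), ∃ M > (0:ℝ), ∀ (k : ℕ) (N : ℝ), 0 < N → N ≤ M →
      |R N k| ≤ δ)
    (hPflux : ∀ (N : ℝ) (k : ℕ), Pflux N k = D N k + R N k) :
    ∃ NF : ℕ → ℝ, (∀ k, 0 < NF k) ∧ Tendsto NF atTop (𝓝 0) ∧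
      (⨅ (N : ℝ) (_ : 0 < N), Filter.liminf (fun k => (D N k : EReal)) atTop)
        ≤ Filter.liminf
            (fun N0 : ℝ => Filter.limsup
              (fun k => ⨅ N ∈ Set.Ioo (NF k) N0, (Pflux N k : EReal)) atTop)
            (𝓝[>] (0:ℝ)) := by
  obtain ⟨NF, hpos, hlim, hle⟩ := partial_inverse_cascade_general D R Pflux hDmono hR hPflux
  exact ⟨NF, hpos, hlim, hle.trans (liminf_le_liminf (.of_forall fun _ => liminf_le_limsup))⟩
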